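/- Assume each component x_i ∼ Cauchy(0, σ_i), i.e., x_i has density t ↦ (σ_i/π)/(σ_i² + t²). Fix θ ∈ [0,2π) with cos θ ≠ 0, assume ∫_0^{2π} F_I(θ') cos θ' dθ' ≠ 0, and assume there exist an integrable G : ℝ^d → ℝ and Σ₀ > 0 such that (∏_{i=1}^d σ_i/2) · |S(θ, u; σ)| ≤ G(u) for all u ∈ ℝ^d whenever min_i σ_i ≥ Σ₀. Then for every w ∈ ℝ^d, |S(θ, w; σ)| / ∫_{ℝ^d} |S(θ, u; σ)| du → |F_R(w)| / ∫_{ℝ^d} |F_R(u)| du as min_i σ_i → ∞ (i.e., for every ε > 0 there exists Σ such that the ratio is within ε of the limit whenever min_i σ_i > Σ). -/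

import Mathlib

open MeasureTheory Filter Real

lemma laplace_int (c : ℝ) (hc : 0 < c) (ξ : ℝ) :
    Integrable (fun t : ℝ => Complex.exp (-(c * |t| : ℝ) + ξ * t * Complex.I)) ∧
    ∫ t : ℝ, Complex.exp (-(c * |t| : ℝ) + ξ * t * Complex.I) = ((2 * c / (c ^ 2 + ξ ^ 2) : ℝ) : ℂ) := by
  have h1 : (-c + ξ * Complex.I : ℂ).re < 0 := by simpa using hc
  have h2 : 0 < (c + ξ * Complex.I : ℂ).re := by simpa using hc
  have e1 : Set.EqOn (fun t : ℝ => Complex.exp (-(c * |t| : ℝ) + ξ * t * Complex.I))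
      (fun t : ℝ => Complex.exp ((-c + ξ * Complex.I) * t)) (Set.Ioi 0) := by
    intro t ht
    simp only [abs_of_pos (Set.mem_Ioi.1 ht)]
    congr 1; push_cast; ring
  have e2 : Set.EqOn (fun t : ℝ => Complex.exp (-(c * |t| : ℝ) + ξ * t * Complex.I))
      (fun t : ℝ => Complex.exp ((c + ξ * Complex.I) * t)) (Set.Iic 0) := by
    intro t ht
    simp only [abs_of_nonpos (Set.mem_Iic.1 ht)]
    congr 1; push_cast; ring
  have i1 := (integrableOn_congr_fun e1 measurableSet_Ioi).2 (integrableOn_exp_mul_complex_Ioi h1 0)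
  have i2 := (integrableOn_congr_fun e2 measurableSet_Iic).2 (integrableOn_exp_mul_complex_Iic h2 0)
  refine ⟨?_, ?_⟩
  · rw [← integrableOn_univ, ← Set.Iic_union_Ioi (a := (0:ℝ))]
    exact i2.union i1
  · rw [← intervalIntegral.integral_Iic_add_Ioi i2 i1, setIntegral_congr_fun measurableSet_Ioi e1,
      setIntegral_congr_fun measurableSet_Iic e2, integral_exp_mul_complex_Ioi h1,
      integral_exp_mul_complex_Iic h2]
    have n1 : (-c + ξ * Complex.I : ℂ) ≠ 0 := fun h => by simp [h] at h1
    have n2 : (c + ξ * Complex.I : ℂ) ≠ 0 := fun h => by simp [h] at h2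
    have n3 : (c ^ 2 + ξ ^ 2 : ℂ) ≠ 0 := by
      have : c ^ 2 + ξ ^ 2 ≠ 0 := by positivity
      exact_mod_cast this
    have n4 : (c ^ 2 + ξ ^ 2 : ℂ) = -((-c + ξ * Complex.I) * (c + ξ * Complex.I)) := by
      ring_nf; simp
    push_cast
    rw [n4]
    simp
    field_simp
    ring

lemma cauchy_integrable (s : ℝ) (hs : 0 < s) : Integrable (fun x : ℝ => (s / π) / (s ^ 2 + x ^ 2)) := by
  have := (ProbabilityTheory.integrable_cauchyPDFReal 0 (γ := s.toNNReal))
  refine this.congr (ae_of_all _ fun x => ?_)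
  simp only [ProbabilityTheory.cauchyPDFReal_def, Real.coe_toNNReal s hs.le, sub_zero]
  rw [add_comm]; field

open FourierTransform in
lemma cauchy_char (s : ℝ) (hs : 0 < s) (t : ℝ) :
    ∫ x : ℝ, (((s / π) / (s ^ 2 + x ^ 2) : ℝ) : ℂ) * Complex.exp (t * x * Complex.I)
      = (Real.exp (-(s * |t|)) : ℝ) := by
  set f : ℝ → ℂ := fun t => Complex.exp (-(2 * π * s * |t| : ℝ)) with hf
  have hc : 0 < 2 * π * s := by positivity
  have hF : 𝓕 f = fun ξ : ℝ => (((s / π) / (s ^ 2 + ξ ^ 2) : ℝ) : ℂ) := by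
    ext ξ
    rw [Real.fourier_real_eq_integral_exp_smul]
    have := (laplace_int (2 * π * s) hc (-2 * π * ξ)).2
    convert this using 1
    · congr 1; ext v
      rw [smul_eq_mul, ← Complex.exp_add]
      congr 1; push_cast; ring
    · congr 1; field_simp
  have hi : Integrable f := by
    have := (laplace_int (2 * π * s) hc 0).1
    simpa [hf] using this
  have hcont : Continuous f := by fun_prop
  have := congrFun (hcont.fourierInv_fourier_eq hi (by rw [hF]; exact (cauchy_integrable s hs).ofReal)) (t / (2 * π))
  rw [hF, Real.fourierInv_eq'] at this
  rw [hf] at this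
  convert this using 1
  · congr 1; ext v
    rw [smul_eq_mul, mul_comm]
    congr 2; simp; field
  · beta_reduce
    rw [abs_div, abs_of_pos (by positivity : 0 < 2 * π)]; push_cast; congr 1; field

lemma phi_int (d : ℕ) (σ : Fin d → ℝ) (hσ : ∀ i, 0 < σ i) :
    Integrable (fun x : Fin d → ℝ => ∏ i, (σ i / π) / ((σ i) ^ 2 + (x i) ^ 2)) :=
  Integrable.fintype_prod (f := fun i (y : ℝ) => (σ i / π) / ((σ i) ^ 2 + y ^ 2))
    fun i => cauchy_integrable _ (hσ i)

lemma phi_complex (d : ℕ) (σ : Fin d → ℝ) (hσ : ∀ i, 0 < σ i) (w : Fin d → ℝ) :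
    ∫ x : Fin d → ℝ, ((∏ i, (σ i / π) / ((σ i) ^ 2 + (x i) ^ 2) : ℝ) : ℂ) *
      Complex.exp (((∑ i, w i * x i : ℝ) : ℂ) * Complex.I) = ((∏ i, Real.exp (-(σ i * |w i|)) : ℝ) : ℂ) := by
  rw [Complex.ofReal_prod]
  simp_rw [← cauchy_char _ (hσ _)]
  rw [← integral_fintype_prod_volume_eq_prod]
  congr 1; ext x
  rw [Finset.prod_mul_distrib, ← Complex.exp_sum]
  push_cast
  rw [Finset.sum_mul]

lemma phi_cos (d : ℕ) (σ : Fin d → ℝ) (hσ : ∀ i, 0 < σ i) (w : Fin d → ℝ) (θ : ℝ) :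
    Integrable (fun x : Fin d → ℝ => (∏ i, (σ i / π) / ((σ i) ^ 2 + (x i) ^ 2)) *
      Real.cos ((∑ i, w i * x i) + θ)) ∧
    ∫ x : Fin d → ℝ, (∏ i, (σ i / π) / ((σ i) ^ 2 + (x i) ^ 2)) *
      Real.cos ((∑ i, w i * x i) + θ) = Real.cos θ * ∏ i, Real.exp (-(σ i * |w i|)) := by
  refine ⟨(phi_int d σ hσ).mul_bdd (c := 1)
    (Continuous.aestronglyMeasurable (by fun_prop)) (ae_of_all _ fun x => by
    simpa using Real.abs_cos_le_one _), ?_⟩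
  have hI : Integrable (fun x : Fin d → ℝ => ((∏ i, (σ i / π) / ((σ i) ^ 2 + (x i) ^ 2) : ℝ) : ℂ) *
      Complex.exp (((∑ i, w i * x i : ℝ) : ℂ) * Complex.I) * Complex.exp (θ * Complex.I)) := by
    refine Integrable.mul_const ?_ _
    refine (phi_int d σ hσ).ofReal.mul_bdd (c := 1)
      (Continuous.aestronglyMeasurable (by fun_prop)) (ae_of_all _ fun x => ?_)
    rw [Complex.norm_exp_ofReal_mul_I]
  have h := congrArg (· * Complex.exp (θ * Complex.I)) (phi_complex d σ hσ w)
  simp only [← integral_mul_const] at h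
  have h2 := congrArg Complex.re h
  have h3 := integral_re hI
  simp only [RCLike.re_to_complex] at h3
  rw [← h3] at h2
  convert h2 using 1
  · congr 1; ext x
    rw [mul_assoc, ← Complex.exp_add, ← add_mul, ← Complex.ofReal_add, Complex.re_ofReal_mul,
      Complex.exp_ofReal_mul_I_re]
  · rw [Complex.re_ofReal_mul, Complex.exp_ofReal_mul_I_re, mul_comm]

lemma f0_eq (d : ℕ) (FI : ℝ → ℝ) (hFIc : Continuous FI)
    (FR : (Fin d → ℝ) → ℝ) (hFRi : Integrable FR) (hFRe : ∀ u, FR (-u) = FR u) (x : Fin d → ℝ) :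
    (∫ θ' in (0:ℝ)..(2 * π), ∫ w' : Fin d → ℝ,
        FI θ' * FR w' * Real.cos ((∑ i, w' i * x i) + θ')) =
    (∫ t in (0:ℝ)..(2 * π), FI t * Real.cos t) * ∫ w' : Fin d → ℝ, FR w' * Real.cos (∑ i, w' i * x i) := by
  have ic : Integrable (fun w' : Fin d → ℝ => FR w' * Real.cos (∑ i, w' i * x i)) :=
    hFRi.mul_bdd (c := 1) (Continuous.aestronglyMeasurable (by fun_prop)) (ae_of_all _ fun x => by
      simpa using Real.abs_cos_le_one _)
  have is : Integrable (fun w' : Fin d → ℝ => FR w' * Real.sin (∑ i, w' i * x i)) :=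
    hFRi.mul_bdd (c := 1) (Continuous.aestronglyMeasurable (by fun_prop)) (ae_of_all _ fun x => by
      simpa using Real.abs_sin_le_one _)
  have hs : ∫ w' : Fin d → ℝ, FR w' * Real.sin (∑ i, w' i * x i) = 0 := by
    have := integral_neg_eq_self (fun w' : Fin d → ℝ => FR w' * Real.sin (∑ i, w' i * x i)) volume
    simp only [hFRe, Pi.neg_apply, neg_mul, Finset.sum_neg_distrib, Real.sin_neg, mul_neg, integral_neg] at this
    linarith
  rw [← intervalIntegral.integral_mul_const]
  congr 1; ext t
  have : ∀ w' : Fin d → ℝ, FI t * FR w' * Real.cos ((∑ i, w' i * x i) + t) =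
     FI t * Real.cos t * (FR w' * Real.cos (∑ i, w' i * x i)) - FI t * Real.sin t * (FR w' * Real.sin (∑ i, w' i * x i)) := by
    intro w'; rw [Real.cos_add]; ring
  simp_rw [this]
  rw [integral_sub (ic.const_mul _) (is.const_mul _), integral_const_mul, integral_const_mul, hs]
  ring

lemma S_eq (d : ℕ) (FR : (Fin d → ℝ) → ℝ) (hFRi : Integrable FR) (hFRe : ∀ u, FR (-u) = FR u)
    (σ : Fin d → ℝ) (hσ : ∀ i, 0 < σ i) (w : Fin d → ℝ) (θ a : ℝ) :
    ∫ x : Fin d → ℝ, (∏ i, (σ i / π) / ((σ i) ^ 2 + (x i) ^ 2)) *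
          (a * (∫ w' : Fin d → ℝ, FR w' * Real.cos (∑ i, w' i * x i)) * Real.cos ((∑ i, w i * x i) + θ))
    = a * Real.cos θ * ∫ v : Fin d → ℝ, FR (w - v) * ∏ i, Real.exp (-(σ i * |v i|)) := by
  set ρ : (Fin d → ℝ) → ℝ := fun x => ∏ i, (σ i / π) / ((σ i) ^ 2 + (x i) ^ 2) with hρ
  have hρi : Integrable ρ := phi_int d σ hσ
  have hprodI : Integrable (fun p : (Fin d → ℝ) × (Fin d → ℝ) => ρ p.1 * FR p.2 *
      (Real.cos (∑ i, p.2 i * p.1 i) * Real.cos ((∑ i, w i * p.1 i) + θ))) := by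
    refine (hρi.mul_prod hFRi).mul_bdd (c := 1) (Continuous.aestronglyMeasurable (by fun_prop)) (ae_of_all _ fun x => ?_)
    rw [norm_mul]
    exact mul_le_one₀ (by simpa using Real.abs_cos_le_one _) (norm_nonneg _) (by simpa using Real.abs_cos_le_one _)
  have e1 : ∀ x : Fin d → ℝ, ρ x * (a * (∫ w' : Fin d → ℝ, FR w' * Real.cos (∑ i, w' i * x i)) * Real.cos ((∑ i, w i * x i) + θ))
      = a * ∫ w' : Fin d → ℝ, ρ x * FR w' * (Real.cos (∑ i, w' i * x i) * Real.cos ((∑ i, w i * x i) + θ)) := by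
    intro x
    have : ∀ w' : Fin d → ℝ, ρ x * FR w' * (Real.cos (∑ i, w' i * x i) * Real.cos ((∑ i, w i * x i) + θ)) =
      ρ x * Real.cos ((∑ i, w i * x i) + θ) * (FR w' * Real.cos (∑ i, w' i * x i)) := fun w' => by ring
    simp_rw [this]
    rw [integral_const_mul]; ring
  have hφ : ∀ v : Fin d → ℝ, |∏ i, Real.exp (-(σ i * |v i|))| ≤ 1 := by
    intro v
    rw [Finset.abs_prod]
    refine Finset.prod_le_one (fun i _ => abs_nonneg _) fun i _ => ?_
    rw [abs_of_pos (Real.exp_pos _), Real.exp_le_one_iff]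
    have := mul_nonneg (hσ i).le (abs_nonneg (v i)); linarith
  have i1 : Integrable (fun v => FR v * ∏ i, Real.exp (-(σ i * |(w + v) i|))) :=
    hFRi.mul_bdd (c := 1) (Continuous.aestronglyMeasurable (by simp only [Pi.add_apply]; fun_prop)) (ae_of_all _ fun v => hφ _)
  have i2 : Integrable (fun v => FR v * ∏ i, Real.exp (-(σ i * |(w - v) i|))) :=
    hFRi.mul_bdd (c := 1) (Continuous.aestronglyMeasurable (by simp only [Pi.sub_apply]; fun_prop)) (ae_of_all _ fun v => hφ _)
  have j1 : ∫ v, FR v * ∏ i, Real.exp (-(σ i * |(w + v) i|)) = ∫ v, FR (w - v) * ∏ i, Real.exp (-(σ i * |v i|)) := by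
    rw [← integral_sub_left_eq_self (fun v => FR (w - v) * ∏ i, Real.exp (-(σ i * |v i|))) volume w,
      ← integral_neg_eq_self]
    simp [hFRe, sub_eq_add_neg]
  have j2 : ∫ v, FR v * ∏ i, Real.exp (-(σ i * |(w - v) i|)) = ∫ v, FR (w - v) * ∏ i, Real.exp (-(σ i * |v i|)) := by
    rw [← integral_sub_left_eq_self (fun v => FR (w - v) * ∏ i, Real.exp (-(σ i * |v i|))) volume w]
    simp
  rw [integral_congr_ae (ae_of_all _ e1), integral_const_mul, mul_assoc, integral_integral_swap hprodI]
  congr 1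
  have e2 : ∀ v : Fin d → ℝ, ∫ x, ρ x * FR v * (Real.cos (∑ i, v i * x i) * Real.cos ((∑ i, w i * x i) + θ)) =
     Real.cos θ / 2 * (FR v * (∏ i, Real.exp (-(σ i * |(w + v) i|))) + FR v * ∏ i, Real.exp (-(σ i * |(w - v) i|))) := by
    intro v
    obtain ⟨p1, p2⟩ := phi_cos d σ hσ (w + v) θ
    obtain ⟨q1, q2⟩ := phi_cos d σ hσ (w - v) θ
    have : ∀ x, ρ x * FR v * (Real.cos (∑ i, v i * x i) * Real.cos ((∑ i, w i * x i) + θ)) =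
        FR v / 2 * (ρ x * Real.cos ((∑ i, (w + v) i * x i) + θ) + ρ x * Real.cos ((∑ i, (w - v) i * x i) + θ)) := by
      intro x
      simp only [Pi.add_apply, Pi.sub_apply, add_mul, sub_mul, Finset.sum_add_distrib, Finset.sum_sub_distrib]
      rw [show ∀ A B : ℝ, A + B + θ = (A + θ) + B by intros; ring, show ∀ A B : ℝ, A - B + θ = (A + θ) - B by intros; ring,
        Real.cos_add (_ + θ), Real.cos_sub]
      ring
    simp_rw [this]
    rw [integral_const_mul, integral_add p1 q1, p2, q2]
    ring
  simp_rw [e2]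
  rw [integral_const_mul, integral_add i1 i2, j1, j2]
  ring

lemma laplace_scale (d : ℕ) (FR : (Fin d → ℝ) → ℝ) (σ : Fin d → ℝ) (hσ : ∀ i, 0 < σ i) (w : Fin d → ℝ) :
    (∏ i, σ i / 2) * ∫ v : Fin d → ℝ, FR (w - v) * ∏ i, Real.exp (-(σ i * |v i|)) =
    ∫ v : Fin d → ℝ, FR (w - fun i => v i / σ i) * ∏ i, (1 / 2 * Real.exp (-|v i|)) := by
  have hdet : (Matrix.diagonal (fun i => (σ i)⁻¹)).det ≠ 0 := by
    rw [Matrix.det_diagonal]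
    exact Finset.prod_ne_zero_iff.2 fun i _ => (inv_pos.2 (hσ i)).ne'
  have h := Real.smul_map_diagonal_volume_pi hdet
  have hm : Measurable (Matrix.toLin' (Matrix.diagonal (fun i => (σ i)⁻¹))) :=
    (LinearMap.continuous_on_pi _).measurable
  have hemb : MeasurableEmbedding (Matrix.toLin' (Matrix.diagonal (fun i => (σ i)⁻¹))) := by
    refine (LinearMap.continuous_on_pi _).measurableEmbedding ?_
    intro x y hxy
    ext i
    have := congrFun hxy i
    simp [Matrix.mulVec_diagonal, (hσ i).ne'] at this
    exact this
  conv_lhs => rw [← h]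
  rw [integral_smul_measure, hemb.integral_map, Matrix.det_diagonal, ENNReal.toReal_ofReal (abs_nonneg _),
    abs_of_pos (Finset.prod_pos fun i _ => inv_pos.2 (hσ i)), smul_eq_mul, ← mul_assoc,
    ← Finset.prod_mul_distrib, ← integral_const_mul]
  congr 1; ext v
  rw [mul_left_comm, ← Finset.prod_mul_distrib]
  congr 1
  · congr 2; ext i; simp [Matrix.mulVec_diagonal]; field
  · refine Finset.prod_congr rfl fun i _ => ?_
    have := hσ i
    simp [Matrix.mulVec_diagonal, abs_mul, abs_of_pos this]
    field_simp

lemma laplace_one :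
    Integrable (fun t : ℝ => 1 / 2 * Real.exp (-|t|)) ∧ ∫ t : ℝ, 1 / 2 * Real.exp (-|t|) = 1 := by
  obtain ⟨h1, h2⟩ := laplace_int 1 one_pos 0
  have e : ∀ t : ℝ, Complex.exp (-(1 * |t| : ℝ) + (0 : ℝ) * t * Complex.I) = ((Real.exp (-|t|) : ℝ) : ℂ) := by
    intro t; push_cast; simp
  simp_rw [e] at h1 h2
  rw [integral_complex_ofReal] at h2
  have h3 := Complex.ofReal_injective h2
  refine ⟨(h1.re : Integrable fun t : ℝ => Real.exp (-|t|)).const_mul _, ?_⟩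
  rw [integral_const_mul, h3]; norm_num

lemma approx_id (d : ℕ) (FR : (Fin d → ℝ) → ℝ) (hFRc : Continuous FR) (hFRb : ∃ C, ∀ u, |FR u| ≤ C)
    (w : Fin d → ℝ) :
    Tendsto (fun σ : Fin d → ℝ => ∫ v : Fin d → ℝ, FR (w - fun i => v i / σ i) * ∏ i, (1 / 2 * Real.exp (-|v i|)))
      (Filter.pi fun _ => atTop) (nhds (FR w)) := by
  obtain ⟨C, hC⟩ := hFRb
  have ki : Integrable (fun v : Fin d → ℝ => ∏ i, (1 / 2 * Real.exp (-|v i|))) :=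
    Integrable.fintype_prod (f := fun i (y : ℝ) => 1 / 2 * Real.exp (-|y|)) fun i => laplace_one.1
  have k1 : ∫ v : Fin d → ℝ, ∏ i, (1 / 2 * Real.exp (-|v i|)) = 1 := by
    rw [integral_fintype_prod_volume_eq_prod (f := fun (i : Fin d) (y : ℝ) => 1 / 2 * Real.exp (-|y|))]
    simp only [laplace_one.2, Finset.prod_const_one]
  have : FR w = ∫ v : Fin d → ℝ, FR w * ∏ i, (1 / 2 * Real.exp (-|v i|)) := by
    rw [integral_const_mul, k1, mul_one]
  rw [this]
  refine tendsto_integral_filter_of_dominated_convergence (fun v => C * ∏ i, (1 / 2 * Real.exp (-|v i|))) ?_ ?_ (ki.const_mul C) ?_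
  · refine Eventually.of_forall fun σ => Continuous.aestronglyMeasurable (by fun_prop)
  · refine Eventually.of_forall fun σ => ae_of_all _ fun v => ?_
    rw [norm_mul, Real.norm_of_nonneg (Finset.prod_nonneg fun i _ => by positivity)]
    exact mul_le_mul_of_nonneg_right (hC _) (Finset.prod_nonneg fun i _ => by positivity)
  · refine ae_of_all _ fun v => Tendsto.mul_const _ ?_
    refine (hFRc.tendsto w).comp ?_
    have : Tendsto (fun σ : Fin d → ℝ => fun i => v i / σ i) (Filter.pi fun _ => atTop) (nhds 0) := by
      rw [tendsto_pi_nhds]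
      intro i
      exact (tendsto_const_nhds.div_atTop tendsto_id).comp (tendsto_eval_pi _ i)
    simpa using tendsto_const_nhds.sub this

/-- Cauchy inputs — the normalized score ratio recovers the spectrum ratio
as all the scale parameters tend to infinity. -/
theorem score_ratio_recovers_spectrum_cauchy
    (d : ℕ)
    (FI : ℝ → ℝ) (hFIc : Continuous FI) (hFIb : ∃ C, ∀ t, |FI t| ≤ C)
    (hFIi : Integrable FI) (hFIsupp : Function.support FI ⊆ Set.Ico 0 (2 * π))
    (FR : (Fin d → ℝ) → ℝ) (hFRc : Continuous FR) (hFRb : ∃ C, ∀ u, |FR u| ≤ C)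
    (hFRi : Integrable FR) (hFRe : ∀ u, FR (-u) = FR u)
    (hFRpos : 0 < ∫ u, |FR u|)
    (f₀ : (Fin d → ℝ) → ℝ)
    (hf₀ : ∀ x, f₀ x = ∫ θ' in (0:ℝ)..(2 * π), ∫ w' : Fin d → ℝ,
        FI θ' * FR w' * Real.cos ((∑ i, w' i * x i) + θ'))
    (S : ℝ → (Fin d → ℝ) → (Fin d → ℝ) → ℝ)
    -- expectation over x with independent components, x_i ∼ Cauchy(0, σ_i), written
    -- via the product density ∏ i, (σ_i/π)/(σ_i² + x_i²) with respect to Lebesgue measure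
    (hS : ∀ θ w σ, S θ w σ =
      ∫ x : Fin d → ℝ,
        (∏ i, (σ i / π) / ((σ i) ^ 2 + (x i) ^ 2)) *
          (f₀ x * Real.cos ((∑ i, w i * x i) + θ)))
    (θ : ℝ) (hθ : θ ∈ Set.Ico 0 (2 * π)) (hcosθ : Real.cos θ ≠ 0)
    (hFIcos : (∫ t in (0:ℝ)..(2 * π), FI t * Real.cos t) ≠ 0)
    (hdom : ∃ G : (Fin d → ℝ) → ℝ, Integrable G ∧ ∃ T₀ > (0 : ℝ),
      ∀ σ : Fin d → ℝ, (∀ i, T₀ ≤ σ i) → ∀ u : Fin d → ℝ,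
        (∏ i, σ i / 2) * |S θ u σ| ≤ G u) :
    ∀ w : Fin d → ℝ, ∀ ε > (0 : ℝ), ∃ T : ℝ,
      ∀ σ : Fin d → ℝ, (∀ i, 0 < σ i) → (∀ i, T < σ i) →
        |(|S θ w σ|) / (∫ u, |S θ u σ|) - |FR w| / (∫ u, |FR u|)| < ε := by
  obtain ⟨G, hG, T₀, hT₀, hdom⟩ := hdom
  set a := ∫ t in (0:ℝ)..(2 * π), FI t * Real.cos t with ha
  have hSeq : ∀ σ : Fin d → ℝ, (∀ i, 0 < σ i) → ∀ w, (∏ i, σ i / 2) * S θ w σ =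
      a * Real.cos θ * ∫ v : Fin d → ℝ, FR (w - fun i => v i / σ i) * ∏ i, (1 / 2 * Real.exp (-|v i|)) := by
    intro σ hσ w
    rw [hS]
    simp_rw [hf₀, f0_eq d FI hFIc FR hFRi hFRe]
    rw [S_eq d FR hFRi hFRe σ hσ w θ a, ← laplace_scale d FR σ hσ w]
    ring
  set l : Filter (Fin d → ℝ) := Filter.pi fun _ => atTop with hl
  have hev : ∀ T : ℝ, ∀ᶠ σ : Fin d → ℝ in l, ∀ i, T ≤ σ i := by
    intro T
    rw [eventually_all]
    exact fun i => (tendsto_eval_pi _ i).eventually (eventually_ge_atTop T)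
  have hlim : ∀ w, Tendsto (fun σ => |(∏ i, σ i / 2) * S θ w σ|) l (nhds |a * Real.cos θ * FR w|) := by
    intro w
    refine Tendsto.abs ?_
    refine ((approx_id d FR hFRc hFRb w).const_mul (a * Real.cos θ)).congr' ?_
    filter_upwards [hev T₀] with σ hσ
    rw [hSeq σ (fun i => hT₀.trans_le (hσ i))]
  have hlimI : Tendsto (fun σ => ∫ u, |(∏ i, σ i / 2) * S θ u σ|) l (nhds (∫ u, |a * Real.cos θ * FR u|)) := by
    refine tendsto_integral_filter_of_dominated_convergence G ?_ ?_ hG (ae_of_all _ hlim)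
    · filter_upwards [hev T₀] with σ hσ
      simp_rw [hSeq σ (fun i => hT₀.trans_le (hσ i))]
      have : StronglyMeasurable (fun u : Fin d → ℝ => ∫ v : Fin d → ℝ, FR (u - fun i => v i / σ i) * ∏ i, (1 / 2 * Real.exp (-|v i|))) := by
        refine StronglyMeasurable.integral_prod_right' (f := fun p : (Fin d → ℝ) × (Fin d → ℝ) =>
          FR (p.1 - fun i => p.2 i / σ i) * ∏ i, (1 / 2 * Real.exp (-|p.2 i|))) ?_
        exact Continuous.stronglyMeasurable (by fun_prop)
      exact (this.const_mul _).norm.aestronglyMeasurable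
    · filter_upwards [hev T₀] with σ hσ
      refine ae_of_all _ fun u => ?_
      rw [Real.norm_eq_abs, abs_abs, abs_mul, abs_of_pos (Finset.prod_pos fun i _ => half_pos (hT₀.trans_le (hσ i)))]
      exact hdom σ hσ u
  have hac : 0 < |a * Real.cos θ| := abs_pos.2 (mul_ne_zero hFIcos hcosθ)
  have hne : ∫ u, |a * Real.cos θ * FR u| ≠ 0 := by
    simp_rw [abs_mul _ (FR _)]
    rw [integral_const_mul]
    positivity
  intro w ε hε
  have hr := (hlim w).div hlimI hne
  have hfin : |a * Real.cos θ * FR w| / (∫ u, |a * Real.cos θ * FR u|) = |FR w| / ∫ u, |FR u| := by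
    simp_rw [abs_mul _ (FR _)]
    rw [integral_const_mul, mul_div_mul_left _ _ hac.ne']
  rw [hfin] at hr
  have hE := Metric.tendsto_nhds.1 hr ε hε
  have hb : (l).HasBasis (fun If : Set (Fin d) × (Fin d → ℝ) => If.1.Finite ∧ ∀ i ∈ If.1, True)
      (fun If => If.1.pi fun i => Set.Ici (If.2 i)) :=
    hasBasis_pi (fun _ => atTop_basis)
  obtain ⟨⟨I, f⟩, -, hsub⟩ := hb.eventually_iff.1 hE
  refine ⟨∑ i, |f i|, fun σ hpos hσ => ?_⟩
  have hmem : σ ∈ I.pi fun i => Set.Ici (f i) := by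
    intro i _
    have h1 : |f i| ≤ ∑ i, |f i| := Finset.single_le_sum (fun i _ => abs_nonneg (f i)) (Finset.mem_univ i)
    exact (le_abs_self _).trans (h1.trans (hσ i).le)
  have := hsub hmem
  have hP : 0 < ∏ i, σ i / 2 := Finset.prod_pos fun i _ => half_pos (hpos i)
  simp only [Pi.div_apply, Real.dist_eq, abs_mul (∏ i, σ i / 2), integral_const_mul, abs_of_pos hP] at this
  rwa [mul_div_mul_left _ _ hP.ne'] at this
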